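/- arXiv:1207.5295 — 3 statements merged into one kernel-verified Lean document; each statement's English description precedes it below -/
import Mathlib

section
/- Let A, B ∈ G(Z,C) and z* ∈ C⁻ \ {0}. Then A ⊕ H(z*) ⊇ (A −_{z*} B) ⊕ B. The inclusion is strict if and only if either B = ∅ and A ≠ ∅, or A ⊕ H(z*) ∉ {Z, ∅} and B ⊕ H(z*) = Z. -/
open Set Topology Pointwise

noncomputable section

variable {X Z : Type*}

/-- The family `G(Z,C)` of subsets `A` with `A = cl co (A + C)`. -/
def Gset [AddCommGroup Z] [Module ℝ Z] [TopologicalSpace Z] (C : Set Z) : Set (Set Z) :=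
  {A | A = closure (convexHull ℝ (A + C))}

/-- `A ⊕ B = cl (A + B)` (Minkowski sum, with `A + ∅ = ∅`). -/
def oplus [AddCommGroup Z] [TopologicalSpace Z] (A B : Set Z) : Set Z :=
  closure (A + B)

/-- The homogeneous closed half-space `H(z*) = {z : z*(z) ≤ 0}`. -/
def Hset [TopologicalSpace Z] [AddCommGroup Z] [Module ℝ Z] (zs : Z →L[ℝ] ℝ) : Set Z :=
  {z | zs z ≤ 0}

/-- `A −_{z*} B = {z : B + z ⊆ A ⊕ H(z*)}`. -/
def resid [TopologicalSpace Z] [AddCommGroup Z] [Module ℝ Z]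
    (zs : Z →L[ℝ] ℝ) (A B : Set Z) : Set Z :=
  {z | ∀ b ∈ B, b + z ∈ oplus A (Hset zs)}

/-- Convexity of a set-valued function: `f(t x₁ + (1-t) x₂) ⊇ t f(x₁) ⊕ (1-t) f(x₂)`. -/
def ConvexSV [AddCommGroup X] [Module ℝ X] [TopologicalSpace Z] [AddCommGroup Z] [Module ℝ Z]
    (f : X → Set Z) : Prop :=
  ∀ x₁ x₂ : X, ∀ t : ℝ, 0 < t → t < 1 →
    oplus (t • f x₁) ((1 - t) • f x₂) ⊆ f (t • x₁ + (1 - t) • x₂)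

/-- Directional derivative `f'_{z*}(x₀, x) = ⋂_{s>0} cl ⋃_{0<t<s} (1/t)(f(x₀+tx) −_{z*} f(x₀))`. -/
def dirDer [AddCommGroup X] [Module ℝ X] [TopologicalSpace Z] [AddCommGroup Z] [Module ℝ Z]
    (zs : Z →L[ℝ] ℝ) (f : X → Set Z) (x₀ x : X) : Set Z :=
  ⋂ s ∈ Ioi (0:ℝ), closure (⋃ t ∈ Ioo (0:ℝ) s, (1 / t) • resid zs (f (x₀ + t • x)) (f x₀))

/-- `S_{(x*,z*)}(x) = {z : x*(x) + z*(z) ≤ 0}`. -/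
def Sfun [TopologicalSpace X] [AddCommGroup X] [Module ℝ X]
    [TopologicalSpace Z] [AddCommGroup Z] [Module ℝ Z]
    (xs : X →L[ℝ] ℝ) (zs : Z →L[ℝ] ℝ) (x : X) : Set Z :=
  {z | xs x + zs z ≤ 0}

/-- The `z*`-subdifferential of `f` at `x₀`. -/
def subdiff [TopologicalSpace X] [AddCommGroup X] [Module ℝ X]
    [TopologicalSpace Z] [AddCommGroup Z] [Module ℝ Z]
    (zs : Z →L[ℝ] ℝ) (f : X → Set Z) (x₀ : X) : Set (X →L[ℝ] ℝ) :=
  {xs | ∀ x : X, dirDer zs f x₀ x ⊆ Sfun xs zs x}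

/-- Scalarization `φ_{f,z*}(x) = inf{−z*(z) : z ∈ f(x)}` taking values in `EReal`. -/
def scalFn [TopologicalSpace Z] [AddCommGroup Z] [Module ℝ Z]
    (zs : Z →L[ℝ] ℝ) (f : X → Set Z) (x : X) : EReal :=
  ⨅ z ∈ f x, ((-(zs z) : ℝ) : EReal)

/-- Inf-residuation on `EReal`: `r −• s = inf {t ∈ ℝ : r ≤ s + t}`. -/
def eresid (r s : EReal) : EReal :=
  sInf {t : EReal | ∃ t' : ℝ, t = (t' : EReal) ∧ r ≤ s + (t' : EReal)}

/-- Scalar directional derivative `φ'_{f,z*}(x₀,x) = inf_{t>0} (1/t)(φ(x₀+tx) −• φ(x₀))`. -/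
def scalDer [AddCommGroup X] [Module ℝ X] [TopologicalSpace Z] [AddCommGroup Z] [Module ℝ Z]
    (zs : Z →L[ℝ] ℝ) (f : X → Set Z) (x₀ x : X) : EReal :=
  ⨅ t ∈ Ioi (0:ℝ), (((1 / t : ℝ) : EReal) * eresid (scalFn zs f (x₀ + t • x)) (scalFn zs f x₀))

/-- Inf-translation `f̂(x; M) = cl co ⋃_{m ∈ M} f(m + x)`. -/
def infTrans [AddCommGroup X] [TopologicalSpace Z] [AddCommGroup Z] [Module ℝ Z]
    (f : X → Set Z) (M : Set X) (x : X) : Set Z :=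
  closure (convexHull ℝ (⋃ m ∈ M, f (m + x)))

end

/-!
The functional `z*` is open, so `S ⊕ H(z*)` consists exactly of the points `z` with `z*(z) ≤ σ(S)`,
where `σ(S) = sup z*(S)`. In particular `z ∈ A −_{z*} B` means `σ(B) + z*(z) ≤ σ(A)`.

If `σ(B)` is finite and `z ∈ A ⊕ H(z*)`, pick `r` with `z*(r) = z*(z) - σ(B)`: then
`r ∈ A −_{z*} B` and `z - r ∈ B ⊕ H(z*)`, and the half-space is absorbed by `A −_{z*} B`. If
`σ(A) = ∞`, then `A −_{z*} B` is the whole space. So the inclusion can only be strict when `B = ∅`,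
or when `σ(B) = ∞` and `σ(A)` is finite; in both cases `(A −_{z*} B) ⊕ B` is empty.
-/

lemma strongDual_surjective_of_ne_zero {R M : Type*} [DivisionRing R] [TopologicalSpace R]
    [AddCommGroup M] [Module R M] [TopologicalSpace M] {f : StrongDual R M} (hf : f ≠ 0) :
    Function.Surjective f :=
  LinearMap.surjective (f := f.toLinearMap) (by exact_mod_cast hf)

section

variable {Z : Type*} [AddCommGroup Z] [TopologicalSpace Z] {A B S : Set Z}

lemma oplus_empty : oplus S ∅ = ∅ := by
  simp only [oplus, add_empty, closure_empty]

lemma empty_oplus : oplus ∅ S = ∅ := by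
  simp only [oplus, empty_add, closure_empty]

variable [Module ℝ Z] {zs : Z →L[ℝ] ℝ} {r w z : Z}

/-- The support function of `S` in direction `z*`, i.e. `sup {z*(s) : s ∈ S}`. It takes values in
`EReal`, being `⊥` for `S = ∅` and `⊤` if `z*` is unbounded above on `S`. -/
noncomputable def supportFun (zs : Z →L[ℝ] ℝ) (S : Set Z) : EReal :=
  ⨆ s ∈ S, (zs s : EReal)

lemma le_supportFun (hz : z ∈ S) : (zs z : EReal) ≤ supportFun zs S :=
  le_iSup₂_of_le z hz le_rfl

lemma supportFun_le_iff {c : EReal} : supportFun zs S ≤ c ↔ ∀ s ∈ S, (zs s : EReal) ≤ c :=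
  iSup₂_le_iff

lemma lt_supportFun_iff {c : EReal} : c < supportFun zs S ↔ ∃ s ∈ S, c < zs s :=
  lt_biSup_iff

lemma oplus_Hset_eq_empty_iff : oplus S (Hset zs) = ∅ ↔ S = ∅ := by
  have Hset_nonempty : (Hset zs).Nonempty := ⟨0, by simp [Hset]⟩
  rw [oplus, closure_empty_iff, add_eq_empty, or_iff_left Hset_nonempty.ne_empty]

lemma mem_add_Hset_iff : z ∈ S + Hset zs ↔ ∃ s ∈ S, zs z ≤ zs s := by
  simp [mem_add, Hset, ← eq_sub_iff_add_eq']

lemma oplus_resid_subset : oplus (resid zs A B) B ⊆ oplus A (Hset zs) := by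
  refine closure_minimal (add_subset_iff.2 fun r hr b hb => ?_) isClosed_closure
  rw [add_comm]
  exact hr b hb

lemma oplus_resid_eq_of_oplus_Hset_eq_univ (hB : B.Nonempty) (hA : oplus A (Hset zs) = univ) :
    oplus (resid zs A B) B = oplus A (Hset zs) := by
  have resid_eq_univ : resid zs A B = univ := by simp [resid, hA]
  rw [hA, resid_eq_univ, oplus, univ_add hB, closure_univ]

variable [ContinuousAdd Z] [ContinuousSMul ℝ Z]

lemma mem_oplus_Hset_iff (hzs : zs ≠ 0) :
    z ∈ oplus S (Hset zs) ↔ (zs z : EReal) ≤ supportFun zs S := by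
  constructor
  · have isClosed_sublevel : IsClosed {z | (zs z : EReal) ≤ supportFun zs S} :=
      isClosed_le (continuous_coe_real_ereal.comp zs.continuous) continuous_const
    refine fun hz => closure_minimal (fun w hw => ?_) isClosed_sublevel hz
    obtain ⟨s, hs, hws⟩ := mem_add_Hset_iff.1 hw
    exact (EReal.coe_le_coe_iff.2 hws).trans (le_supportFun hs)
  · intro hz
    have strict_sublevel_subset : zs ⁻¹' Iio (zs z) ⊆ S + Hset zs := fun w hw => by
      obtain ⟨s, hs, hws⟩ := lt_supportFun_iff.1 ((EReal.coe_lt_coe_iff.2 hw).trans_le hz)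
      exact mem_add_Hset_iff.2 ⟨s, hs, (EReal.coe_lt_coe_iff.1 hws).le⟩
    refine closure_mono strict_sublevel_subset ?_
    rw [← (zs.isOpenMap_of_ne_zero hzs).preimage_closure_eq_closure_preimage zs.continuous,
      closure_Iio]
    exact le_refl (zs z)

lemma oplus_Hset_eq_univ_iff (hzs : zs ≠ 0) :
    oplus S (Hset zs) = univ ↔ supportFun zs S = ⊤ := by
  simp only [eq_univ_iff_forall, mem_oplus_Hset_iff hzs]
  refine ⟨fun h => ?_, fun h z => h ▸ le_top⟩
  refine EReal.eq_top_iff_forall_lt _ |>.2 fun x => ?_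
  obtain ⟨z, hz⟩ := strongDual_surjective_of_ne_zero hzs (x + 1)
  exact (EReal.coe_lt_coe_iff.2 (hz ▸ lt_add_one x)).trans_le (h z)

lemma mem_resid_iff (hzs : zs ≠ 0) :
    z ∈ resid zs A B ↔ supportFun zs B + zs z ≤ supportFun zs A := by
  have le_sub_iff (x : EReal) : x ≤ supportFun zs A - zs z ↔ x + zs z ≤ supportFun zs A :=
    EReal.le_sub_iff_add_le (.inl (EReal.coe_ne_bot _)) (.inl (EReal.coe_ne_top _))
  simp only [← le_sub_iff, supportFun_le_iff]
  simp only [le_sub_iff, resid, mem_ofPred_eq, mem_oplus_Hset_iff hzs, map_add, EReal.coe_add]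

lemma resid_eq_empty (hzs : zs ≠ 0) (hA : oplus A (Hset zs) ≠ univ)
    (hB : oplus B (Hset zs) = univ) : resid zs A B = ∅ := by
  refine eq_empty_of_forall_notMem fun z hz => hA ((oplus_Hset_eq_univ_iff hzs).2 ?_)
  rw [mem_resid_iff hzs, (oplus_Hset_eq_univ_iff hzs).1 hB, EReal.top_add_coe] at hz
  exact top_le_iff.1 hz

lemma add_mem_resid (hzs : zs ≠ 0) (hr : r ∈ resid zs A B) (hw : w ∈ Hset zs) :
    r + w ∈ resid zs A B := by
  rw [mem_resid_iff hzs] at hr ⊢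
  refine le_trans ?_ hr
  gcongr
  simpa [Hset] using hw

lemma add_mem_oplus_resid (hzs : zs ≠ 0) (hr : r ∈ resid zs A B)
    (hw : w ∈ oplus B (Hset zs)) : r + w ∈ oplus (resid zs A B) B := by
  refine map_mem_closure (continuous_const_add r) hw ?_
  intro x hx
  obtain ⟨b, hb, u, hu, rfl⟩ := mem_add.1 hx
  rw [add_comm b, ← add_assoc]
  exact add_mem_add (add_mem_resid hzs hr hu) hb

lemma oplus_resid_eq_of_oplus_Hset_ne_univ (hzs : zs ≠ 0) (hB : B.Nonempty)
    (hB_univ : oplus B (Hset zs) ≠ univ) :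
    oplus (resid zs A B) B = oplus A (Hset zs) := by
  refine oplus_resid_subset.antisymm fun z hz => ?_
  obtain ⟨b, hb⟩ := hB
  obtain ⟨β, hβ⟩ : ∃ β : ℝ, (β : EReal) = supportFun zs B :=
    ⟨_, EReal.coe_toReal (mt (oplus_Hset_eq_univ_iff hzs).2 hB_univ)
      (ne_bot_of_le_ne_bot (EReal.coe_ne_bot _) (le_supportFun hb))⟩
  obtain ⟨r, hr⟩ := strongDual_surjective_of_ne_zero hzs (zs z - β)
  have r_mem : r ∈ resid zs A B := by
    rw [mem_resid_iff hzs, ← hβ, hr, ← EReal.coe_add, add_sub_cancel]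
    exact (mem_oplus_Hset_iff hzs).1 hz
  have sub_mem : z - r ∈ oplus B (Hset zs) := by
    rw [mem_oplus_Hset_iff hzs, map_sub, hr, sub_sub_cancel, hβ]
  simpa only [add_sub_cancel] using add_mem_oplus_resid hzs r_mem sub_mem

theorem stmt4_general (hzs : zs ≠ 0) (A B : Set Z) :
    oplus (resid zs A B) B ⊆ oplus A (Hset zs) ∧
    (oplus (resid zs A B) B ⊂ oplus A (Hset zs) ↔
      (B = ∅ ∧ A ≠ ∅) ∨
        ((oplus A (Hset zs) ≠ univ ∧ oplus A (Hset zs) ≠ ∅) ∧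
          oplus B (Hset zs) = univ)) := by
  refine ⟨oplus_resid_subset, ?_⟩
  rcases B.eq_empty_or_nonempty with rfl | hB
  · simp [oplus_empty, empty_oplus, oplus_Hset_eq_empty_iff, nonempty_iff_ne_empty, empty_ne_univ]
  by_cases hB_univ : oplus B (Hset zs) = univ
  · by_cases hA_univ : oplus A (Hset zs) = univ
    · simp [oplus_resid_eq_of_oplus_Hset_eq_univ hB hA_univ, hA_univ, hB.ne_empty]
    · simp [resid_eq_empty hzs hA_univ hB_univ, empty_oplus, hA_univ, hB_univ, hB.ne_empty,
        nonempty_iff_ne_empty]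
  · simp [oplus_resid_eq_of_oplus_Hset_ne_univ hzs hB hB_univ, hB_univ, hB.ne_empty]

end

theorem stmt4 {Z : Type*} [AddCommGroup Z] [Module ℝ Z] [TopologicalSpace Z]
    [IsTopologicalAddGroup Z] [ContinuousSMul ℝ Z] [LocallyConvexSpace ℝ Z]
    (C : Set Z) (hCconv : Convex ℝ C) (hC0 : (0:Z) ∈ C)
    (hCcone : ∀ t : ℝ, 0 < t → t • C ⊆ C) (hclC : closure C ≠ Set.univ)
    (zs : Z →L[ℝ] ℝ) (hzs : ∀ z ∈ C, zs z ≤ 0) (hzs0 : zs ≠ 0)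
    (A B : Set Z) (hA : A ∈ Gset C) (hB : B ∈ Gset C) :
    oplus (resid zs A B) B ⊆ oplus A (Hset zs) ∧
    (oplus (resid zs A B) B ⊂ oplus A (Hset zs) ↔
      (B = ∅ ∧ A ≠ ∅) ∨
        ((oplus A (Hset zs) ≠ Set.univ ∧ oplus A (Hset zs) ≠ ∅) ∧
          oplus B (Hset zs) = Set.univ)) := by
  exact stmt4_general hzs0 A B
end

section
/- Let f : X → G(Z,C) be convex, x₀ ∈ X and z* ∈ C⁻ \ {0}. Then for every x ∈ X, f'_{z*}(x₀, x) = cl co ⋃_{t>0} (1/t)·(f(x₀ + t x) −_{z*} f(x₀)), and the map x ↦ f'_{z*}(x₀, x) is sublinear as a function from X into G(Z, H(z*)), i.e., f'_{z*}(x₀, t x) ⊇ t·f'_{z*}(x₀, x) for all t > 0 and x ∈ X, and f'_{z*}(x₀, x₁ + x₂) ⊇ f'_{z*}(x₀, x₁) ⊕ f'_{z*}(x₀, x₂) for all x₁, x₂ ∈ X. -/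
open Set Topology Pointwise

/-!
Write `Q t x` for the difference quotient `(1/t)(f(x₀ + t x) −_{z*} f(x₀))`. Convexity of
`x ↦ f x ⊕ H(z*)` makes the graph of each `Q t` a convex set, and this graph contains `(0, 0)`.
Since `c z ∈ Q t (c x) ↔ z ∈ Q (t c) x`, the graphs of the maps `Q t` are dilates of each other, so
they grow as `t` decreases and their union over `t > 0` is a convex cone. Monotonicity makes all the
unions over `0 < t < s` equal, so the derivative is the closure of that union; the cone property
says that the union is sublinear in `x`, hence has convex values, and both pass to the closure.
-/

theorem biUnion_Ioo_eq_biUnion_Ioi_of_antitoneOn {α β : Type*} [LinearOrder α] [DenselyOrdered α]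
    {g : α → Set β} {a s : α} (hg : AntitoneOn g (Ioi a)) (hs : a < s) :
    ⋃ t ∈ Ioo a s, g t = ⋃ t ∈ Ioi a, g t := by
  refine (biUnion_mono Ioo_subset_Ioi_self fun _ _ => subset_rfl).antisymm
    (iUnion₂_subset fun t ht => ?_)
  obtain ⟨r, har, hr⟩ := exists_between (lt_min ht hs)
  obtain ⟨hrt, hrs⟩ := lt_min_iff.1 hr
  exact (hg har ht hrt.le).trans (subset_biUnion_of_mem (u := g) ⟨har, hrs⟩)

theorem smul_add_smul_add_smul_of_add_eq_one {R M : Type*} [CommSemiring R] [AddCommMonoid M]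
    [Module R M] {a b : R} (hab : a + b = 1) (w u v : M) (t : R) :
    a • (w + t • u) + b • (w + t • v) = w + t • (a • u + b • v) := by
  calc a • (w + t • u) + b • (w + t • v) = (a + b) • w + t • (a • u + b • v) := by module
    _ = w + t • (a • u + b • v) := by rw [hab, one_smul]

section SetValued

variable {Z : Type*} [AddCommGroup Z] [TopologicalSpace Z]

theorem subset_oplus {A B : Set Z} (hB : (0 : Z) ∈ B) : A ⊆ oplus A B :=
  (subset_add_left A hB).trans subset_closure

theorem oplus_closure_subset [ContinuousAdd Z] {A B S : Set Z} (h : A + B ⊆ S) :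
    oplus (closure A) (closure B) ⊆ closure S := by
  refine closure_minimal ?_ isClosed_closure
  rintro _ ⟨p, hp, q, hq, rfl⟩
  exact map_mem_closure₂ continuous_add hp hq fun a ha b hb => h (add_mem_add ha hb)

variable [Module ℝ Z]

theorem zero_mem_Hset (zs : Z →L[ℝ] ℝ) : (0 : Z) ∈ Hset zs :=
  (map_zero zs).le

theorem convex_Hset (zs : Z →L[ℝ] ℝ) : Convex ℝ (Hset zs) :=
  convex_halfSpace_le zs.toLinearMap.isLinear 0

variable {X : Type*} [AddCommGroup X] [Module ℝ X] {f : X → Set Z}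

theorem ConvexSV.smul_add_smul_mem (hf : ConvexSV f) {x y : X} {p q : Z} (hp : p ∈ f x)
    (hq : q ∈ f y) {a b : ℝ} (ha : 0 < a) (hb : 0 < b) (hab : a + b = 1) :
    a • p + b • q ∈ f (a • x + b • y) := by
  obtain rfl : b = 1 - a := eq_sub_of_add_eq' hab
  exact hf x y a ha (sub_pos.1 hb)
    (subset_closure (add_mem_add (smul_mem_smul_set hp) (smul_mem_smul_set hq)))

theorem ConvexSV.oplus_const [ContinuousAdd Z] [ContinuousConstSMul ℝ Z]
    (hf : ConvexSV f) {D : Set Z} (hD : Convex ℝ D) : ConvexSV fun x => oplus (f x) D := by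
  intro x y a ha ha1
  refine closure_minimal ?_ isClosed_closure
  rintro _ ⟨_, ⟨p, hp, rfl⟩, _, ⟨q, hq, rfl⟩, rfl⟩
  refine map_mem_closure₂ (f := fun p q : Z => a • p + (1 - a) • q) (by fun_prop) hp hq ?_
  rintro _ ⟨u, hu, d, hd, rfl⟩ _ ⟨v, hv, e, he, rfl⟩
  have hb : 0 < 1 - a := sub_pos.2 ha1
  have hab : a + (1 - a) = 1 := add_sub_cancel a 1
  exact ⟨a • u + (1 - a) • v, hf.smul_add_smul_mem hu hv ha hb hab,
    a • d + (1 - a) • e, hD hd he ha.le hb.le hab, by module⟩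

end SetValued

section DiffQuot

variable {X Z : Type*} [AddCommGroup X] [Module ℝ X] [AddCommGroup Z] [Module ℝ Z]
  [TopologicalSpace Z] {zs : Z →L[ℝ] ℝ} {f : X → Set Z} {x₀ x x₁ x₂ : X} {z z₁ z₂ : Z} {c t : ℝ}

/-- The difference quotient `(1/t)(f(x₀ + t x) −_{z*} f(x₀))` of `f` at `x₀` with step `t` in
direction `x`. The direction comes last so that the quotient of a fixed step is a set-valued map
of the direction. -/
def diffQuot (zs : Z →L[ℝ] ℝ) (f : X → Set Z) (x₀ : X) (t : ℝ) (x : X) : Set Z :=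
  (1 / t) • resid zs (f (x₀ + t • x)) (f x₀)

/-- The union over all steps `t > 0` of the difference quotients of `f` at `x₀` in direction `x`.
For convex `f` its closure is the directional derivative `dirDer`. -/
def diffQuotUnion (zs : Z →L[ℝ] ℝ) (f : X → Set Z) (x₀ x : X) : Set Z :=
  ⋃ t ∈ Ioi (0 : ℝ), diffQuot zs f x₀ t x

theorem mem_diffQuot_iff (ht : 0 < t) :
    z ∈ diffQuot zs f x₀ t x ↔ ∀ b ∈ f x₀, b + t • z ∈ oplus (f (x₀ + t • x)) (Hset zs) := by
  rw [diffQuot, one_div, mem_inv_smul_set_iff₀ ht.ne']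
  rfl

theorem mem_diffQuotUnion_iff :
    z ∈ diffQuotUnion zs f x₀ x ↔ ∃ t, 0 < t ∧ z ∈ diffQuot zs f x₀ t x := by
  simp only [diffQuotUnion, mem_iUnion₂, mem_Ioi, exists_prop]

theorem zero_mem_diffQuot_zero (ht : 0 < t) : (0 : Z) ∈ diffQuot zs f x₀ t 0 := by
  rw [mem_diffQuot_iff ht, smul_zero, smul_zero, add_zero]
  intro b hb
  simpa only [add_zero] using subset_oplus (zero_mem_Hset zs) hb

theorem smul_mem_diffQuot_smul_iff (ht : 0 < t) (hc : 0 < c) :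
    c • z ∈ diffQuot zs f x₀ t (c • x) ↔ z ∈ diffQuot zs f x₀ (t * c) x := by
  simp only [mem_diffQuot_iff ht, mem_diffQuot_iff (mul_pos ht hc), smul_smul]

theorem smul_mem_diffQuotUnion_smul (hc : 0 < c) (hz : z ∈ diffQuotUnion zs f x₀ x) :
    c • z ∈ diffQuotUnion zs f x₀ (c • x) := by
  obtain ⟨t, ht, hz⟩ := mem_diffQuotUnion_iff.1 hz
  refine mem_diffQuotUnion_iff.2 ⟨t / c, div_pos ht hc, ?_⟩
  rwa [smul_mem_diffQuot_smul_iff (div_pos ht hc) hc, div_mul_cancel₀ t hc.ne']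

variable [ContinuousAdd Z] [ContinuousConstSMul ℝ Z]

theorem ConvexSV.smul_add_smul_mem_diffQuot (hf : ConvexSV f) (ht : 0 < t)
    (hz₁ : z₁ ∈ diffQuot zs f x₀ t x₁) (hz₂ : z₂ ∈ diffQuot zs f x₀ t x₂) {a b : ℝ}
    (ha : 0 < a) (hb : 0 < b) (hab : a + b = 1) :
    a • z₁ + b • z₂ ∈ diffQuot zs f x₀ t (a • x₁ + b • x₂) := by
  rw [mem_diffQuot_iff ht] at hz₁ hz₂ ⊢
  intro w hw
  have hmem := (hf.oplus_const (convex_Hset zs)).smul_add_smul_mem (hz₁ w hw) (hz₂ w hw) ha hb hab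
  rwa [smul_add_smul_add_smul_of_add_eq_one hab, smul_add_smul_add_smul_of_add_eq_one hab] at hmem

theorem ConvexSV.antitoneOn_diffQuot (hf : ConvexSV f) :
    AntitoneOn (fun t => diffQuot zs f x₀ t x) (Ioi 0) := by
  intro s (hs : 0 < s) t (ht : 0 < t) hst z hz
  rcases hst.eq_or_lt with rfl | hst
  · exact hz
  have hc : 0 < s / t := div_pos hs ht
  have hscaled : (s / t) • z ∈ diffQuot zs f x₀ t ((s / t) • x) := by
    simpa only [smul_zero, add_zero] using
      hf.smul_add_smul_mem_diffQuot ht hz (zero_mem_diffQuot_zero ht) hc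
        (sub_pos.2 ((div_lt_one ht).2 hst)) (add_sub_cancel _ _)
  rwa [smul_mem_diffQuot_smul_iff ht hc, mul_div_cancel₀ s ht.ne'] at hscaled

theorem ConvexSV.add_mem_diffQuotUnion (hf : ConvexSV f) (hz₁ : z₁ ∈ diffQuotUnion zs f x₀ x₁)
    (hz₂ : z₂ ∈ diffQuotUnion zs f x₀ x₂) : z₁ + z₂ ∈ diffQuotUnion zs f x₀ (x₁ + x₂) := by
  obtain ⟨t₁, ht₁, hz₁⟩ := mem_diffQuotUnion_iff.1 hz₁
  obtain ⟨t₂, ht₂, hz₂⟩ := mem_diffQuotUnion_iff.1 hz₂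
  have hm : 0 < min t₁ t₂ := lt_min ht₁ ht₂
  have hhalf : (0 : ℝ) < 1 / 2 := one_half_pos
  have hmid := hf.smul_add_smul_mem_diffQuot hm
    (hf.antitoneOn_diffQuot hm ht₁ (min_le_left t₁ t₂) hz₁)
    (hf.antitoneOn_diffQuot hm ht₂ (min_le_right t₁ t₂) hz₂) hhalf hhalf (add_halves 1)
  rw [← smul_add, ← smul_add, smul_mem_diffQuot_smul_iff hm hhalf] at hmid
  exact mem_diffQuotUnion_iff.2 ⟨_, mul_pos hm hhalf, hmid⟩

theorem ConvexSV.convex_diffQuotUnion (hf : ConvexSV f) :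
    Convex ℝ (diffQuotUnion zs f x₀ x) := by
  rw [convex_iff_forall_pos]
  intro z₁ hz₁ z₂ hz₂ a b ha hb hab
  have hsum := hf.add_mem_diffQuotUnion (smul_mem_diffQuotUnion_smul ha hz₁)
    (smul_mem_diffQuotUnion_smul hb hz₂)
  rwa [← add_smul, hab, one_smul] at hsum

theorem ConvexSV.dirDer_eq_closure_diffQuotUnion (hf : ConvexSV f) :
    dirDer zs f x₀ x = closure (diffQuotUnion zs f x₀ x) := by
  have hunion : ∀ s ∈ Ioi (0 : ℝ), closure (⋃ t ∈ Ioo 0 s, diffQuot zs f x₀ t x) =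
      closure (diffQuotUnion zs f x₀ x) := fun s hs =>
    congrArg closure (biUnion_Ioo_eq_biUnion_Ioi_of_antitoneOn hf.antitoneOn_diffQuot hs)
  exact (iInter₂_congr hunion).trans (biInter_const nonempty_Ioi _)

end DiffQuot

theorem stmt9_general {X Z : Type*} [AddCommGroup X] [Module ℝ X] [AddCommGroup Z] [Module ℝ Z]
    [TopologicalSpace Z] [ContinuousAdd Z] [ContinuousConstSMul ℝ Z]
    (zs : Z →L[ℝ] ℝ) (f : X → Set Z) (hf : ConvexSV f) (x₀ : X) :
    (∀ x : X, dirDer zs f x₀ x =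
      closure (convexHull ℝ
        (⋃ t ∈ Set.Ioi (0:ℝ), (1 / t) • resid zs (f (x₀ + t • x)) (f x₀)))) ∧
    (∀ t : ℝ, 0 < t → ∀ x : X, t • dirDer zs f x₀ x ⊆ dirDer zs f x₀ (t • x)) ∧
    (∀ x₁ x₂ : X,
      oplus (dirDer zs f x₀ x₁) (dirDer zs f x₀ x₂) ⊆ dirDer zs f x₀ (x₁ + x₂)) := by
  simp only [hf.dirDer_eq_closure_diffQuotUnion]
  refine ⟨fun x => ?_, fun t ht x => ?_, fun x₁ x₂ => ?_⟩
  · exact congrArg closure hf.convex_diffQuotUnion.convexHull_eq.symm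
  · rw [← closure_smul₀' ht.ne']
    exact closure_mono (image_subset_iff.2 fun z => smul_mem_diffQuotUnion_smul ht)
  · exact oplus_closure_subset (add_subset_iff.2 fun _ h₁ _ h₂ => hf.add_mem_diffQuotUnion h₁ h₂)

theorem stmt9 {Z : Type*} [AddCommGroup Z] [Module ℝ Z] [TopologicalSpace Z]
    [IsTopologicalAddGroup Z] [ContinuousSMul ℝ Z] [LocallyConvexSpace ℝ Z]
    {X : Type*} [AddCommGroup X] [Module ℝ X] [TopologicalSpace X]
    [IsTopologicalAddGroup X] [ContinuousSMul ℝ X] [LocallyConvexSpace ℝ X]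
    (C : Set Z) (hCconv : Convex ℝ C) (hC0 : (0:Z) ∈ C)
    (hCcone : ∀ t : ℝ, 0 < t → t • C ⊆ C) (hclC : closure C ≠ Set.univ)
    (zs : Z →L[ℝ] ℝ) (hzs : ∀ z ∈ C, zs z ≤ 0) (hzs0 : zs ≠ 0)
    (f : X → Set Z) (hf : ConvexSV f) (hfG : ∀ x : X, f x ∈ Gset C)
    (x₀ : X) :
    (∀ x : X, dirDer zs f x₀ x =
      closure (convexHull ℝ
        (⋃ t ∈ Set.Ioi (0:ℝ), (1 / t) • resid zs (f (x₀ + t • x)) (f x₀)))) ∧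
    (∀ t : ℝ, 0 < t → ∀ x : X, t • dirDer zs f x₀ x ⊆ dirDer zs f x₀ (t • x)) ∧
    (∀ x₁ x₂ : X,
      oplus (dirDer zs f x₀ x₁) (dirDer zs f x₀ x₂) ⊆ dirDer zs f x₀ (x₁ + x₂)) :=
  stmt9_general zs f hf x₀
end

section
/- Let f : X → G(Z,C) be convex and x₀ ∈ core(dom f), i.e., for every x ∈ X there is t₀ > 0 with x₀ + t x ∈ dom f for all t ∈ [0, t₀]. If f is proper (dom f ≠ ∅ and f(x) ≠ Z for all x ∈ X), then there exists z* ∈ C⁻ \ {0} such that f'_{z*}(x₀, x) ∉ {Z, ∅} for all x ∈ X. If f is C-proper ((f(x) − C) \ f(x) ≠ ∅ for all x ∈ dom f, where f(x) − C is the elementwise Minkowski difference set {z − c : z ∈ f(x), c ∈ C}), then such a z* can be chosen in C⁻ \ (−C⁻). -/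
open Set Topology Pointwise

/-!
Fix `z*` bounded above on `f x₀`, with supremum `S`. Comparing `f (x₀ + t • x)` with `f x₀` along
the line through `x₀` in direction `x`, convexity puts the directional derivative between two
half-spaces: for `y ∈ f (x₀ + r • x)` and `y' ∈ f (x₀ - r' • x)` with `r, r' > 0`,
`{z* ≤ (z* y - S) / r} ⊆ f'_{z*}(x₀, x) ⊆ {z* ≤ (S - z* y') / r'}`.
Such `y` and `y'` exist since `x₀` is a core point of the domain, and for `z* ≠ 0` both half-spaces
are nonempty and proper. A suitable `z*` is obtained by separating `f x₀` from a point outside it: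
being bounded above on `f x₀ ⊇ f x₀ + C`, it is nonpositive on `C`. If the separated point
is `a - c` with `a ∈ f x₀` and `c ∈ C`, then `z* a < z* (a - c)` forces `z* c < 0`.
-/

theorem add_nsmul_mem_of_add_subset {M : Type*} [AddMonoid M] {A C : Set M} (hA : A + C ⊆ A)
    {a c : M} (ha : a ∈ A) (hc : c ∈ C) (n : ℕ) : a + n • c ∈ A := by
  induction n with
  | zero => simpa using ha
  | succ n ih =>
    rw [succ_nsmul, ← add_assoc]
    exact hA (add_mem_add ih hc)

theorem nonpos_of_bddAbove_image_of_add_subset {M R F : Type*} [AddMonoid M] [AddCommGroup R]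
    [LinearOrder R] [IsOrderedAddMonoid R] [Archimedean R] [FunLike F M R] [AddMonoidHomClass F M R]
    {A C : Set M} {φ : F} (hA : A + C ⊆ A) (hne : A.Nonempty) (hφ : BddAbove (φ '' A)) {c : M}
    (hc : c ∈ C) : φ c ≤ 0 := by
  obtain ⟨a, ha⟩ := hne
  obtain ⟨u, hu⟩ := hφ
  by_contra! hpos
  obtain ⟨n, hn⟩ := exists_lt_nsmul hpos (u - φ a)
  have hle : φ (a + n • c) ≤ u := hu (mem_image_of_mem φ (add_nsmul_mem_of_add_subset hA ha hc n))
  rw [map_add, map_nsmul] at hle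
  exact hle.not_gt (sub_lt_iff_lt_add'.1 hn)

section Gset

variable {Z : Type*} [AddCommGroup Z] [Module ℝ Z] [TopologicalSpace Z] {A C : Set Z}

theorem isClosed_of_mem_gset (hA : A ∈ Gset C) : IsClosed A := by
  rw [show A = _ from hA]
  exact isClosed_closure

theorem convex_of_mem_gset [IsTopologicalAddGroup Z] [ContinuousSMul ℝ Z] (hA : A ∈ Gset C) :
    Convex ℝ A := by
  rw [show A = _ from hA]
  exact (convex_convexHull ℝ _).closure

theorem add_subset_of_mem_gset (hA : A ∈ Gset C) : A + C ⊆ A := by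
  conv_rhs => rw [show A = _ from hA]
  exact (subset_convexHull ℝ _).trans subset_closure

theorem exists_forall_nonpos_and_forall_lt_of_mem_gset [IsTopologicalAddGroup Z]
    [ContinuousSMul ℝ Z] [LocallyConvexSpace ℝ Z] (hA : A ∈ Gset C) (hne : A.Nonempty) {z₁ : Z}
    (hz₁ : z₁ ∉ A) :
    ∃ zs : Z →L[ℝ] ℝ, (∀ z ∈ C, zs z ≤ 0) ∧ ∀ a ∈ A, zs a < zs z₁ := by
  obtain ⟨zs, u, hu, huz₁⟩ := geometric_hahn_banach_closed_point
    (convex_of_mem_gset hA) (isClosed_of_mem_gset hA) hz₁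
  have hbdd : BddAbove (zs '' A) := ⟨u, forall_mem_image.2 fun a ha => (hu a ha).le⟩
  exact ⟨zs, fun c hc => nonpos_of_bddAbove_image_of_add_subset (add_subset_of_mem_gset hA) hne
    hbdd hc, fun a ha => (hu a ha).trans huz₁⟩

end Gset

section Residual

variable {Z : Type*} [AddCommGroup Z] [Module ℝ Z] [TopologicalSpace Z] {zs : Z →L[ℝ] ℝ}
  {A B : Set Z}

theorem mem_oplus_hset_of_le {a z : Z} (ha : a ∈ A) (hz : zs z ≤ zs a) :
    z ∈ oplus A (Hset zs) := by
  have hsub : z - a ∈ Hset zs := by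
    change zs (z - a) ≤ 0
    rwa [map_sub, sub_nonpos]
  exact subset_closure ⟨a, ha, z - a, hsub, add_sub_cancel a z⟩

theorem le_of_mem_oplus_hset {M : ℝ} (hM : M ∈ upperBounds (zs '' A)) {z : Z}
    (hz : z ∈ oplus A (Hset zs)) : zs z ≤ M := by
  refine closure_minimal ?_ (isClosed_le zs.continuous continuous_const) hz
  rintro _ ⟨a, ha, h, hh : zs h ≤ 0, rfl⟩
  have haM : zs a ≤ M := hM (mem_image_of_mem zs ha)
  change zs (a + h) ≤ M
  rw [map_add]
  linarith

theorem le_sub_of_mem_resid {M S : ℝ} (hM : M ∈ upperBounds (zs '' A)) (hS : IsLUB (zs '' B) S)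
    {z : Z} (hz : z ∈ resid zs A B) : zs z ≤ M - S := by
  suffices hS_le : S ≤ M - zs z by linarith
  refine hS.2 (forall_mem_image.2 fun b hb => ?_)
  have hle : zs (b + z) ≤ M := le_of_mem_oplus_hset hM (hz b hb)
  rw [map_add] at hle
  linarith

end Residual

section DirectionalDerivative

variable {X Z : Type*} [AddCommGroup X] [Module ℝ X] [AddCommGroup Z] [Module ℝ Z]
  [TopologicalSpace Z] {f : X → Set Z} {zs : Z →L[ℝ] ℝ} {x₀ x : X} {S r t : ℝ}

theorem ConvexSV.smul_add_smul_mem_s11 (hf : ConvexSV f) {x₁ x₂ : X} {a b : Z} (ha : a ∈ f x₁)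
    (hb : b ∈ f x₂) (ht₀ : 0 < t) (ht₁ : t < 1) :
    t • a + (1 - t) • b ∈ f (t • x₁ + (1 - t) • x₂) :=
  hf x₁ x₂ t ht₀ ht₁
    (subset_closure (add_mem_add (smul_mem_smul_set ha) (smul_mem_smul_set hb)))

theorem ConvexSV.smul_add_smul_mem_segment (hf : ConvexSV f) {y b : Z} (hy : y ∈ f (x₀ + r • x))
    (hb : b ∈ f x₀) (ht : 0 < t) (htr : t < r) :
    (t / r) • y + (1 - t / r) • b ∈ f (x₀ + t • x) := by
  have hr : 0 < r := ht.trans htr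
  have hpoint : (t / r) • (x₀ + r • x) + (1 - t / r) • x₀ = x₀ + t • x := by
    match_scalars <;> field_simp; ring
  rw [← hpoint]
  exact hf.smul_add_smul_mem_s11 hy hb (div_pos ht hr) ((div_lt_one hr).2 htr)

theorem ConvexSV.smul_add_smul_mem_of_opposite (hf : ConvexSV f) {a y : Z}
    (ha : a ∈ f (x₀ + t • x)) (hy : y ∈ f (x₀ - r • x)) (ht : 0 < t) (hr : 0 < r) :
    (r / (r + t)) • a + (1 - r / (r + t)) • y ∈ f x₀ := by
  have hrt : 0 < r + t := add_pos hr ht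
  have hpoint : (r / (r + t)) • (x₀ + t • x) + (1 - r / (r + t)) • (x₀ - r • x) = x₀ := by
    match_scalars <;> field_simp <;> ring
  have hmem := hf.smul_add_smul_mem_s11 ha hy (div_pos hr hrt) ((div_lt_one hrt).2 (by linarith))
  rwa [hpoint] at hmem

theorem ConvexSV.add_mul_mem_upperBounds (hf : ConvexSV f) (hS : S ∈ upperBounds (zs '' f x₀))
    {y : Z} (hy : y ∈ f (x₀ - r • x)) (ht : 0 < t) (hr : 0 < r) :
    S + t * ((S - zs y) / r) ∈ upperBounds (zs '' f (x₀ + t • x)) := by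
  refine forall_mem_image.2 fun a ha => ?_
  have hle := hS (mem_image_of_mem zs (hf.smul_add_smul_mem_of_opposite ha hy ht hr))
  simp only [map_add, map_smul, smul_eq_mul] at hle
  have hrt : 0 < r + t := add_pos hr ht
  have hweights : r / (r + t) * zs a + (1 - r / (r + t)) * zs y
      = (r * zs a + t * zs y) / (r + t) := by
    field_simp
    ring
  rw [hweights, div_le_iff₀ hrt] at hle
  calc zs a ≤ (S * (r + t) - t * zs y) / r := by rw [le_div_iff₀ hr]; linarith
    _ = S + t * ((S - zs y) / r) := by field_simp; ring

theorem ConvexSV.dirDer_subset (hf : ConvexSV f) (hS : IsLUB (zs '' f x₀) S) {y : Z}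
    (hy : y ∈ f (x₀ - r • x)) (hr : 0 < r) :
    dirDer zs f x₀ x ⊆ {z | zs z ≤ (S - zs y) / r} := by
  refine (biInter_subset_of_mem (mem_Ioi.2 one_pos)).trans
    (closure_minimal ?_ (isClosed_le zs.continuous continuous_const))
  refine iUnion₂_subset fun t ht => ?_
  rintro _ ⟨z, hz, rfl⟩
  have hle := le_sub_of_mem_resid (hf.add_mul_mem_upperBounds hS.1 hy ht.1 hr) hS hz
  change zs ((1 / t) • z) ≤ _
  rw [map_smul, smul_eq_mul, one_div, inv_mul_le_iff₀ ht.1]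
  linarith

theorem ConvexSV.smul_mem_resid (hf : ConvexSV f) (hS : S ∈ upperBounds (zs '' f x₀)) {y w : Z}
    (hy : y ∈ f (x₀ + r • x)) (ht : 0 < t) (htr : t < r) (hw : zs w ≤ (zs y - S) / r) :
    t • w ∈ resid zs (f (x₀ + t • x)) (f x₀) := by
  intro b hb
  refine mem_oplus_hset_of_le (hf.smul_add_smul_mem_segment hy hb ht htr) ?_
  have hr : 0 < r := ht.trans htr
  have hbS : zs b ≤ S := hS (mem_image_of_mem zs hb)
  simp only [map_add, map_smul, smul_eq_mul]
  calc zs b + t * zs w ≤ zs b + t * ((zs y - zs b) / r) := by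
        have : (zs y - S) / r ≤ (zs y - zs b) / r := by gcongr
        gcongr
        exact hw.trans this
    _ = t / r * zs y + (1 - t / r) * zs b := by ring

theorem ConvexSV.subset_dirDer (hf : ConvexSV f) (hS : S ∈ upperBounds (zs '' f x₀)) {y : Z}
    (hy : y ∈ f (x₀ + r • x)) (hr : 0 < r) :
    {z | zs z ≤ (zs y - S) / r} ⊆ dirDer zs f x₀ x := by
  refine fun w hw => mem_iInter₂.2 fun s hs => subset_closure ?_
  obtain ⟨t, ht, hlt⟩ := exists_between (lt_min (mem_Ioi.1 hs) hr)
  obtain ⟨hts, htr⟩ := lt_min_iff.1 hlt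
  refine mem_iUnion₂.2 ⟨t, ⟨ht, hts⟩, t • w, hf.smul_mem_resid hS hy ht htr hw, ?_⟩
  simp only [one_div]
  exact inv_smul_smul₀ ht.ne' w

theorem nonempty_of_forall_exists_nonempty_add_smul {X Z : Type*} [AddCommGroup X] [Module ℝ X]
    {f : X → Set Z} {x₀ : X} (hcore : ∀ x : X, ∃ r > (0 : ℝ), (f (x₀ + r • x)).Nonempty) :
    (f x₀).Nonempty := by
  obtain ⟨r, -, hne⟩ := hcore 0
  rwa [smul_zero, add_zero] at hne

theorem ConvexSV.dirDer_ne_univ_and_ne_empty (hf : ConvexSV f)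
    (hcore : ∀ x : X, ∃ r > (0 : ℝ), (f (x₀ + r • x)).Nonempty) (hzs : zs ≠ 0)
    (hbdd : BddAbove (zs '' f x₀)) (x : X) :
    dirDer zs f x₀ x ≠ univ ∧ dirDer zs f x₀ x ≠ ∅ := by
  have hS : IsLUB (zs '' f x₀) (sSup (zs '' f x₀)) :=
    isLUB_csSup ((nonempty_of_forall_exists_nonempty_add_smul hcore).image zs) hbdd
  have hsurj : Function.Surjective zs :=
    LinearMap.surjective (f := zs.toLinearMap) (by exact_mod_cast hzs)
  constructor
  · obtain ⟨r, hr, y, hy⟩ := hcore (-x)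
    rw [smul_neg, ← sub_eq_add_neg] at hy
    obtain ⟨w, hw⟩ := hsurj ((sSup (zs '' f x₀) - zs y) / r + 1)
    refine (ne_univ_iff_exists_notMem _).2 ⟨w, fun hmem => ?_⟩
    have hle : zs w ≤ _ := hf.dirDer_subset hS hy hr hmem
    linarith
  · obtain ⟨r, hr, y, hy⟩ := hcore x
    obtain ⟨w, hw⟩ := hsurj ((zs y - sSup (zs '' f x₀)) / r)
    exact Nonempty.ne_empty ⟨w, hf.subset_dirDer hS.1 hy hr hw.le⟩

end DirectionalDerivative

section Existence

variable {X Z : Type*} [AddCommGroup X] [Module ℝ X] [AddCommGroup Z] [Module ℝ Z]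
  [TopologicalSpace Z] [IsTopologicalAddGroup Z] [ContinuousSMul ℝ Z] [LocallyConvexSpace ℝ Z]
  {C : Set Z} {f : X → Set Z} {x₀ : X}

theorem ConvexSV.exists_separating_forall_dirDer_ne (hf : ConvexSV f) (hx₀ : f x₀ ∈ Gset C)
    (hcore : ∀ x : X, ∃ r > (0 : ℝ), (f (x₀ + r • x)).Nonempty) {z₁ : Z} (hz₁ : z₁ ∉ f x₀) :
    ∃ zs : Z →L[ℝ] ℝ, (∀ z ∈ C, zs z ≤ 0) ∧ zs ≠ 0 ∧ (∀ a ∈ f x₀, zs a < zs z₁) ∧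
      ∀ x : X, dirDer zs f x₀ x ≠ univ ∧ dirDer zs f x₀ x ≠ ∅ := by
  have hne : (f x₀).Nonempty := nonempty_of_forall_exists_nonempty_add_smul hcore
  obtain ⟨zs, hC, hlt⟩ := exists_forall_nonpos_and_forall_lt_of_mem_gset hx₀ hne hz₁
  have hzs : zs ≠ 0 := by
    rintro rfl
    obtain ⟨a, ha⟩ := hne
    exact lt_irrefl _ (hlt a ha)
  have hbdd : BddAbove (zs '' f x₀) := ⟨zs z₁, forall_mem_image.2 fun a ha => (hlt a ha).le⟩
  exact ⟨zs, hC, hzs, hlt, hf.dirDer_ne_univ_and_ne_empty hcore hzs hbdd⟩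

/-- As `dom f` is convex, `hcore` says that `x₀ ∈ core (dom f)`. -/
theorem stmt11_general (hf : ConvexSV f) (hx₀ : f x₀ ∈ Gset C)
    (hcore : ∀ x : X, ∃ r > (0 : ℝ), (f (x₀ + r • x)).Nonempty) :
    (f x₀ ≠ univ →
      ∃ zs : Z →L[ℝ] ℝ, (∀ z ∈ C, zs z ≤ 0) ∧ zs ≠ 0 ∧
        ∀ x : X, dirDer zs f x₀ x ≠ univ ∧ dirDer zs f x₀ x ≠ ∅) ∧
    (((f x₀ - C) \ f x₀).Nonempty →
      ∃ zs : Z →L[ℝ] ℝ, (∀ z ∈ C, zs z ≤ 0) ∧ ¬(∀ z ∈ C, 0 ≤ zs z) ∧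
        ∀ x : X, dirDer zs f x₀ x ≠ univ ∧ dirDer zs f x₀ x ≠ ∅) := by
  constructor
  · intro hproper
    obtain ⟨z₁, hz₁⟩ := (ne_univ_iff_exists_notMem _).1 hproper
    obtain ⟨zs, hC, hzs, -, hder⟩ := hf.exists_separating_forall_dirDer_ne hx₀ hcore hz₁
    exact ⟨zs, hC, hzs, hder⟩
  · rintro ⟨_, ⟨a, ha, c, hc, rfl⟩, hac⟩
    obtain ⟨zs, hC, -, hlt, hder⟩ := hf.exists_separating_forall_dirDer_ne hx₀ hcore hac
    refine ⟨zs, hC, fun hnonneg => ?_, hder⟩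
    have hlt_sub : zs a < zs (a - c) := hlt a ha
    rw [map_sub] at hlt_sub
    linarith [hnonneg c hc]

end Existence

theorem stmt11 {Z : Type*} [AddCommGroup Z] [Module ℝ Z] [TopologicalSpace Z]
    [IsTopologicalAddGroup Z] [ContinuousSMul ℝ Z] [LocallyConvexSpace ℝ Z]
    {X : Type*} [AddCommGroup X] [Module ℝ X] [TopologicalSpace X]
    [IsTopologicalAddGroup X] [ContinuousSMul ℝ X] [LocallyConvexSpace ℝ X]
    (C : Set Z) (hCconv : Convex ℝ C) (hC0 : (0:Z) ∈ C)
    (hCcone : ∀ t : ℝ, 0 < t → t • C ⊆ C) (hclC : closure C ≠ Set.univ)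
    (f : X → Set Z) (hf : ConvexSV f) (hfG : ∀ x : X, f x ∈ Gset C)
    (x₀ : X)
    (hcore : ∀ x : X, ∃ t₀ > (0:ℝ), ∀ t : ℝ, 0 ≤ t → t ≤ t₀ → f (x₀ + t • x) ≠ ∅) :
    (((∃ x : X, f x ≠ ∅) ∧ (∀ x : X, f x ≠ Set.univ)) →
      ∃ zs : Z →L[ℝ] ℝ, (∀ z ∈ C, zs z ≤ 0) ∧ zs ≠ 0 ∧
        ∀ x : X, dirDer zs f x₀ x ≠ Set.univ ∧ dirDer zs f x₀ x ≠ ∅) ∧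
    ((∀ x : X, f x ≠ ∅ → ((f x - C) \ f x).Nonempty) →
      ∃ zs : Z →L[ℝ] ℝ, (∀ z ∈ C, zs z ≤ 0) ∧ ¬(∀ z ∈ C, 0 ≤ zs z) ∧
        ∀ x : X, dirDer zs f x₀ x ≠ Set.univ ∧ dirDer zs f x₀ x ≠ ∅) := by
  have hcore' (x : X) : ∃ r > (0 : ℝ), (f (x₀ + r • x)).Nonempty :=
    (hcore x).imp fun r ⟨hr, hne⟩ => ⟨hr, nonempty_iff_ne_empty.2 (hne r hr.le le_rfl)⟩
  exact (stmt11_general hf (hfG x₀) hcore').imp (fun h hproper => h (hproper.2 x₀))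
    fun h hCproper => h (hCproper x₀ (nonempty_of_forall_exists_nonempty_add_smul hcore').ne_empty)
end
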